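/- Let (T, R, A) be weakly G-quasiapproximable. Then: (1) the extended good metrics M^G and R ∩ T^c on T^c are ℕ-equivalent; (2) R ∩ T̄^c and R^G ∩ T̄^c are ℕ-equivalent as metrics on T̄^c. If (T, R, A) is moreover weakly G-approximable, then (3) R and R^G are ℕ-equivalent orthogonal metrics on T, i.e. R lies in the preferred ℕ-equivalence class of orthogonal metrics. -/

import Mathlib

namespace GApprox

open CategoryTheory CategoryTheory.Limits CategoryTheory.Pretriangulated

universe w v u

variable (C : Type u) [Category.{v} C] [HasZeroObject C] [HasShift C ℤ]
  [Preadditive C] [∀ n : ℤ, (shiftFunctor C n).Additive] [Pretriangulated C]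
  [HasCoproducts.{v} C]

/-- The right orthogonal of a class of objects. -/
def rOrth (A : Set C) : Set C := {X | ∀ a ∈ A, ∀ f : a ⟶ X, f = 0}

/-- The left orthogonal of a class of objects. -/
def lOrth (A : Set C) : Set C := {X | ∀ a ∈ A, ∀ f : X ⟶ a, f = 0}

/-- `Hom(A, B) = 0`. -/
def homZero (A B : Set C) : Prop := ∀ a ∈ A, ∀ b ∈ B, ∀ f : a ⟶ b, f = 0

/-- The star operation `A ⋆ B`: objects `Y` admitting a distinguished triangle
`X ⟶ Y ⟶ Z ⟶ ΣX` with `X ∈ A` and `Z ∈ B`. -/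
def starSet (A B : Set C) : Set C :=
  {Y | ∃ (X Z : C) (f : X ⟶ Y) (g : Y ⟶ Z) (h : Z ⟶ X⟦(1 : ℤ)⟧),
    Triangle.mk f g h ∈ (distTriang C) ∧ X ∈ A ∧ Z ∈ B}

/-- The (strictly full) shift `Σⁿ A` of a class of objects. -/
def shiftSet (n : ℤ) (A : Set C) : Set C :=
  {X | ∃ a ∈ A, Nonempty (X ≅ (shiftFunctor C n).obj a)}

/-- An object is compact if any map to a coproduct factors through a finite subcoproduct. -/
def IsCompactObj (X : C) : Prop :=
  ∀ (α : Type v) (f : α → C) (g : X ⟶ ∐ f),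
    ∃ (s : Finset α) (h : X ⟶ ∐ (fun i : {a : α // a ∈ s} => f i.1)),
      g = h ≫ Sigma.desc (fun i => Sigma.ι f i.1)

/-- The class of compact objects `T^c`. -/
def compacts : Set C := {X | IsCompactObj C X}

/-- The category is compactly generated. -/
def CompactlyGenerated : Prop :=
  ∀ X : C, (∀ K ∈ compacts C, ∀ f : K ⟶ X, f = 0) → IsZero X

/-- Closure under direct summands (retracts), `smd`. -/
def smd (A : Set C) : Set C :=
  {X | ∃ Y ∈ A, ∃ (i : X ⟶ Y) (r : Y ⟶ X), i ≫ r = 𝟙 X}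

/-- Closure of a class of objects under finite direct sums and extensions (`coprod`). -/
inductive extClosure (U : Set C) : C → Prop
  | of {X : C} : X ∈ U → extClosure U X
  | zero {X : C} : IsZero X → extClosure U X
  | ext {X Y Z : C} (f : X ⟶ Y) (g : Y ⟶ Z) (h : Z ⟶ X⟦(1 : ℤ)⟧) :
      Triangle.mk f g h ∈ (distTriang C) → extClosure U X → extClosure U Z → extClosure U Y

/-- Closure of a class of objects under arbitrary coproducts, extensions and
direct summands. -/
inductive bigClosure (U : Set C) : C → Prop
  | of {X : C} : X ∈ U → bigClosure U X
  | zero {X : C} : IsZero X → bigClosure U X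
  | coprod {α : Type v} (f : α → C) :
      (∀ i, bigClosure U (f i)) → ∀ {X : C}, (X ≅ ∐ f) → bigClosure U X
  | ext {X Y Z : C} (f : X ⟶ Y) (g : Y ⟶ Z) (h : Z ⟶ X⟦(1 : ℤ)⟧) :
      Triangle.mk f g h ∈ (distTriang C) → bigClosure U X → bigClosure U Z → bigClosure U Y
  | retract {X Y : C} (i : X ⟶ Y) (r : Y ⟶ X) :
      i ≫ r = 𝟙 X → bigClosure U Y → bigClosure U X

/-- Closure of a class of objects under finite direct sums, `add`. -/
def addClosure (U : Set C) : Set C :=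
  {X | ∃ (n : ℕ) (f : ULift.{v} (Fin n) → C), (∀ i, f i ∈ U) ∧ Nonempty (X ≅ ∐ f)}

/-- Closure of a class of objects under arbitrary coproducts, `Add`. -/
def bigAddClosure (U : Set C) : Set C :=
  {X | ∃ (α : Type v) (f : α → C), (∀ i, f i ∈ U) ∧ Nonempty (X ≅ ∐ f)}

/-- `coprod_n(U)`. -/
def coprodPow (U : Set C) : ℕ → Set C
  | 0 => {X | IsZero X}
  | n + 1 => starSet C (addClosure C U) (coprodPow U n)

/-- `Coprod_n(U)`. -/
def coprodPowBig (U : Set C) : ℕ → Set C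
  | 0 => {X | IsZero X}
  | n + 1 => starSet C (bigAddClosure C U) (coprodPowBig U n)

/-- `G[a,b] = ∪ { G^m : a ≤ m ≤ b }`. -/
def unionIcc (G : ℤ → Set C) (a b : ℤ) : Set C := ⋃ m ∈ Set.Icc a b, G m

/-- `G(-∞,b] = ∪ { G^m : m ≤ b }`. -/
def unionIic (G : ℤ → Set C) (b : ℤ) : Set C := ⋃ m ∈ Set.Iic b, G m

/-- `G(-∞,∞) = ∪ { G^m : m ∈ ℤ }`. -/
def unionAll (G : ℤ → Set C) : Set C := ⋃ m : ℤ, G m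

/-- `G^{[a,b]} = smd(coprod(G[a,b]))`. -/
def gInt (G : ℤ → Set C) (a b : ℤ) : Set C :=
  smd C {X | extClosure C (unionIcc C G a b) X}

/-- `G^{(-∞,b]} = smd(coprod(G(-∞,b]))`. -/
def gIic (G : ℤ → Set C) (b : ℤ) : Set C :=
  smd C {X | extClosure C (unionIic C G b) X}

/-- `G^{[a,b]}_k = smd(coprod_k(G[a,b]))`. -/
def gIntPow (G : ℤ → Set C) (a b k : ℤ) : Set C :=
  smd C (coprodPow C (unionIcc C G a b) k.toNat)

/-- `Ḡ^{[a,b]}`. -/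
def gBarInt (G : ℤ → Set C) (a b : ℤ) : Set C :=
  {X | bigClosure C (unionIcc C G a b) X}

/-- `Ḡ^{(-∞,b]}`. -/
def gBarIic (G : ℤ → Set C) (b : ℤ) : Set C :=
  {X | bigClosure C (unionIic C G b) X}

/-- `Ḡ^{[a,b]}_k = smd(Coprod_k(G[a,b]))`. -/
def gBarIntPow (G : ℤ → Set C) (a b k : ℤ) : Set C :=
  smd C (coprodPowBig C (unionIcc C G a b) k.toNat)

/-- `M^G_n := G^{(-∞,-n]}`. -/
def MG (G : ℤ → Set C) (n : ℤ) : Set C := gIic C G (-n)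

/-- `R^G_n := ⊥((M^G_n)^⊥)`, orthogonals taken in the whole category. -/
def RG (G : ℤ → Set C) (n : ℤ) : Set C := lOrth C (rOrth C (MG C G n))

/-- A pre-generating sequence. -/
structure IsPreGenSeq (G : ℤ → Set C) : Prop where
  compact : ∀ i : ℤ, G i ⊆ compacts C
  generates : smd C {X | extClosure C (unionAll C G) X} = compacts C

/-- A generating sequence. -/
structure IsGenSeq (G : ℤ → Set C) extends IsPreGenSeq C G : Prop where
  shift_cond : ∀ n : ℤ,
    shiftSet C (-1) (G n) ∪ G n ∪ shiftSet C 1 (G n) ⊆ gInt C G (n - 1) (n + 1)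

/-- A finite generating sequence. -/
structure IsFinGenSeq (G : ℤ → Set C) extends IsGenSeq C G : Prop where
  finite : ∀ i : ℤ, (G i).Finite

/-- ℕ-equivalence of generating sequences. -/
def GenSeqNEquiv (G G' : ℤ → Set C) : Prop :=
  ∃ N : ℤ, 0 ≤ N ∧ (∀ n : ℤ, G' n ⊆ gInt C G (n - N) (n + N)) ∧
    ∀ n : ℤ, G n ⊆ gInt C G' (n - N) (n + N)

/-- ℕ-equivalence of (extended good) metrics. -/
def MetricNEquiv (M N : ℤ → Set C) : Prop :=
  ∃ n : ℤ, 0 ≤ n ∧ (∀ i : ℤ, M (i + n) ⊆ N i) ∧ ∀ i : ℤ, N (i + n) ⊆ M i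

/-- An extended good metric. -/
structure IsExtGoodMetric (M : ℤ → Set C) : Prop where
  zero_mem : ∀ (n : ℤ) (X : C), IsZero X → X ∈ M n
  iso_closed : ∀ (n : ℤ) ⦃X Y : C⦄, (X ≅ Y) → X ∈ M n → Y ∈ M n
  star_subset : ∀ n : ℤ, starSet C (M n) (M n) ⊆ M n
  shift_one : ∀ n : ℤ, shiftSet C 1 (M (n + 1)) ⊆ M n
  antitone : ∀ n : ℤ, M (n + 1) ⊆ M n
  shift_neg_one : ∀ n : ℤ, shiftSet C (-1) (M (n + 1)) ⊆ M n

/-- An orthogonal metric. -/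
structure IsOrthMetric (M : ℤ → Set C) extends IsExtGoodMetric C M : Prop where
  orth : ∀ n : ℤ, lOrth C (rOrth C (M n)) = M n

/-- The closure of the compacts `T̄^c := ∩ₙ T^c ⋆ Rₙ`. -/
def closCompacts (Rm : ℤ → Set C) : Set C := ⋂ n : ℤ, starSet C (compacts C) (Rm n)

/-- `(T, R, A)` is `G`-preapproximable. -/
structure IsGPreApprox (G Rm : ℤ → Set C) (A : ℤ) : Prop where
  orthMetric : IsOrthMetric C Rm
  A_pos : 0 < A
  cond0 : ∀ i : ℤ, MG C G i ⊆ ⋃ n ∈ {n : ℤ | |n| ≤ A}, shiftSet C n (MG C G (i + 1))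
  cond1 : ∀ i : ℤ, MG C G (i + A) ⊆ Rm i ∩ compacts C
  cond2 : ∀ n : ℤ, ∃ N : ℤ, ∀ i : ℤ, N ≤ i → homZero C (G n) (Rm i)

/-- There is a distinguished triangle `E ⟶ F ⟶ D ⟶ ΣE` with `E ∈ S` and `D ∈ D`. -/
def approxTriangle (F : C) (S D : Set C) : Prop :=
  ∃ (E Dd : C) (f : E ⟶ F) (g : F ⟶ Dd) (h : Dd ⟶ E⟦(1 : ℤ)⟧),
    Triangle.mk f g h ∈ (distTriang C) ∧ E ∈ S ∧ Dd ∈ D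

/-- `(T, R, A)` is weakly `G`-approximable. -/
structure IsWeakGApprox (G Rm : ℤ → Set C) (A : ℤ) extends IsGPreApprox C G Rm A : Prop where
  hom_vanish : ∀ n i : ℤ, A ≤ n + i → homZero C (G n) (Rm i)
  approx : ∀ i : ℤ, ∀ F ∈ Rm i,
    approxTriangle C F (gBarInt C G (-A - i) (A - i)) (Rm (i + 1))

/-- `(T, R, A)` is `G`-approximable. -/
structure IsGApprox (G Rm : ℤ → Set C) (A : ℤ) extends IsWeakGApprox C G Rm A : Prop where
  approx' : ∀ i : ℤ, ∀ F ∈ Rm i,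
    approxTriangle C F (gBarIntPow C G (-A - i) (A - i) A) (Rm (i + 1))

/-- `(T, R, A)` is weakly `G`-quasiapproximable. -/
structure IsWeakGQuasiApprox (G Rm : ℤ → Set C) (A : ℤ) extends IsGPreApprox C G Rm A : Prop where
  hom_vanish : ∀ n i : ℤ, A ≤ n + i → homZero C (G n) (Rm i)
  approx : ∀ i : ℤ, ∀ F ∈ Rm i ∩ closCompacts C Rm,
    approxTriangle C F (gBarInt C G (-A - i) (A - i)) (Rm (i + 1) ∩ closCompacts C Rm)

/-- `(T, R, A)` is `G`-quasiapproximable. -/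
structure IsGQuasiApprox (G Rm : ℤ → Set C) (A : ℤ) extends IsWeakGQuasiApprox C G Rm A : Prop where
  approx' : ∀ i : ℤ, ∀ F ∈ Rm i ∩ closCompacts C Rm,
    approxTriangle C F (gBarIntPow C G (-A - i) (A - i) A) (Rm (i + 1) ∩ closCompacts C Rm)

/-- The coproduct of a sequence of objects. -/
noncomputable def seqCoprod (E : ℕ → C) : C := ∐ (fun n : ULift.{v} ℕ => E n.down)

/-- The canonical inclusion into the coproduct of a sequence. -/
noncomputable def seqInj (E : ℕ → C) (n : ℕ) : E n ⟶ seqCoprod C E :=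
  Sigma.ι (fun n : ULift.{v} ℕ => E n.down) (ULift.up n)

/-- The map `1 - shift` on the coproduct of a sequence. -/
noncomputable def oneMinusShift (E : ℕ → C) (e : ∀ n, E n ⟶ E (n + 1)) :
    seqCoprod C E ⟶ seqCoprod C E :=
  Sigma.desc (fun n => seqInj C E n.down - e n.down ≫ seqInj C E (n.down + 1))

/-- `H`, equipped with `π`, `δ`, is a homotopy colimit of the sequence `E`. -/
def IsHocolim (E : ℕ → C) (e : ∀ n, E n ⟶ E (n + 1)) (H : C)
    (π : seqCoprod C E ⟶ H) (δ : H ⟶ (seqCoprod C E)⟦(1 : ℤ)⟧) : Prop :=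
  Triangle.mk (oneMinusShift C E e) π δ ∈ (distTriang C)

/-- A single compact generator. -/
def IsCompactGenerator (G₀ : C) : Prop :=
  IsCompactObj C G₀ ∧ ∀ X : C, (∀ n : ℤ, ∀ f : (shiftFunctor C n).obj G₀ ⟶ X, f = 0) → IsZero X

/-- The strictly full subcategory `{Σʲ G₀}`. -/
def singletonShift (G₀ : C) (j : ℤ) : Set C :=
  {X | Nonempty (X ≅ (shiftFunctor C j).obj G₀)}

/-- The generating sequence `Gⁿ := {Σ⁻ⁿ G₀}`. -/
def genSeqNeg (G₀ : C) (n : ℤ) : Set C := singletonShift C G₀ (-n)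

/-- The generating sequence `Gⁿ := {Σⁿ G₀}`. -/
def genSeqPos (G₀ : C) (n : ℤ) : Set C := singletonShift C G₀ n

/-!
Approximating `F ∈ Rᵢ` again and again produces a tower `F = D₀ ⟶ D₁ ⟶ ⋯` with `Dₖ ∈ Rᵢ₊ₖ` in
which the fiber of every transition map is built from the `Gᵐ` with `m ≤ A - i`. Each compact object
eventually has no maps to `Dₖ`, which is used twice.

* The shift map acts nilpotently on `Hom(K, ∐ Dₖ)` for `K` compact, so `1 - shift` is invertible:
  the homotopy colimit of the tower vanishes. A map from `F` to an object right orthogonal to the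
  fibers extends along the whole tower, hence is zero. This compares `R` with `R^G`.
* If `F` is compact, then `F ⟶ Dₖ` is zero for some `k`. Climbing back down the tower, `𝟙 F`
  factors through a finite extension of objects of the `Gᵐ`. This compares `R ∩ T^c` with `M^G`.
-/

section Coproducts

variable {D : Type*} [Category D] [Preadditive D] {α : Type w} (f : α → D) [HasCoproduct f]

open Classical in
/-- The idempotent endomorphism of `∐ f` that is zero on the summands indexed by `s` and the
identity on the others. Compactness of `X` means that every map `X ⟶ ∐ f` is annihilated by one of
these. -/
noncomputable def killSummands (s : Finset α) : ∐ f ⟶ ∐ f :=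
  𝟙 _ - ∑ i ∈ s, Sigma.π f i ≫ Sigma.ι f i

variable {f} {s : Finset α}

lemma ι_killSummands_of_mem {i : α} (hi : i ∈ s) : Sigma.ι f i ≫ killSummands f s = 0 := by
  classical
  rw [killSummands, Preadditive.comp_sub, Preadditive.comp_sum, Finset.sum_eq_single_of_mem i hi]
  · simp
  · intro j _ hji
    exact Sigma.ι_π_of_ne_assoc f hji.symm _ |>.trans zero_comp

lemma ι_killSummands_of_notMem {i : α} (hi : i ∉ s) :
    Sigma.ι f i ≫ killSummands f s = Sigma.ι f i := by
  classical
  rw [killSummands, Preadditive.comp_sub, Preadditive.comp_sum, Finset.sum_eq_zero]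
  · simp
  · intro j hj
    have hij : i ≠ j := fun h => hi (h ▸ hj)
    exact Sigma.ι_π_of_ne_assoc f hij _ |>.trans zero_comp

lemma killSummands_comp_killSummands [DecidableEq α] (t : Finset α) :
    killSummands f s ≫ killSummands f t = killSummands f (s ∪ t) := by
  refine Sigma.hom_ext _ _ fun i => ?_
  rw [← Category.assoc]
  by_cases hs : i ∈ s
  · rw [ι_killSummands_of_mem hs, zero_comp,
      ι_killSummands_of_mem (Finset.mem_union_left t hs)]
  · rw [ι_killSummands_of_notMem hs]
    by_cases ht : i ∈ t
    · rw [ι_killSummands_of_mem ht, ι_killSummands_of_mem (Finset.mem_union_right s ht)]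
    · rw [ι_killSummands_of_notMem ht, ι_killSummands_of_notMem (by simp [hs, ht])]

lemma comp_killSummands_eq_zero_iff [DecidableEq α] {X : D} {g : X ⟶ ∐ f} :
    g ≫ killSummands f s = 0 ↔ g = ∑ i ∈ s, (g ≫ Sigma.π f i) ≫ Sigma.ι f i := by
  rw [killSummands, Subsingleton.elim (fun a b => Classical.propDecidable (a = b)) ‹DecidableEq α›]
  simp only [Preadditive.comp_sub, Category.comp_id, Preadditive.comp_sum, sub_eq_zero,
    Category.assoc]

lemma killSummands_comp_sigmaComparison {E : Type*} [Category E] [Preadditive E] (F : D ⥤ E)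
    [F.PreservesZeroMorphisms] [HasCoproduct fun i => F.obj (f i)] :
    killSummands (fun i => F.obj (f i)) s ≫ sigmaComparison F f =
      sigmaComparison F f ≫ F.map (killSummands f s) := by
  refine Sigma.hom_ext _ _ fun i => ?_
  rw [← Category.assoc, ι_comp_sigmaComparison_assoc, ← F.map_comp]
  by_cases hi : i ∈ s
  · rw [ι_killSummands_of_mem hi, ι_killSummands_of_mem hi, zero_comp, F.map_zero]
  · rw [ι_killSummands_of_notMem hi, ι_killSummands_of_notMem hi, ι_comp_sigmaComparison]

end Coproducts

section PreadditiveOrthogonal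

variable {D : Type*} [Category D] [Preadditive D]

lemma rOrth_anti {U V : Set D} (h : U ⊆ V) : rOrth D V ⊆ rOrth D U :=
  fun _ hY X hX => hY X (h hX)

lemma lOrth_anti {U V : Set D} (h : U ⊆ V) : lOrth D V ⊆ lOrth D U :=
  fun _ hX Y hY => hX Y (h hY)

lemma mem_lOrth_of_isZero {B : Set D} {X : D} (hX : IsZero X) : X ∈ lOrth D B :=
  fun _ _ _ => hX.eq_of_src _ _

lemma mem_lOrth_of_retract {B : Set D} {X Y : D} (hY : Y ∈ lOrth D B) {i : X ⟶ Y} {r : Y ⟶ X}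
    (hir : i ≫ r = 𝟙 X) : X ∈ lOrth D B := fun Z hZ q => by
  simpa [reassoc_of% hir] using i ≫= hY Z hZ (r ≫ q)

end PreadditiveOrthogonal

section SequentialCoproduct

variable {D : Type u} [Category.{v} D] [HasCoproducts.{v} D] {E : ℕ → D} {e : ∀ n, E n ⟶ E (n + 1)}

variable (E e) in
/-- The endomorphism of `∐ Eₙ` induced by the transition maps, whose difference from the identity is
`oneMinusShift`. -/
noncomputable def seqShift : seqCoprod D E ⟶ seqCoprod D E :=
  Sigma.desc fun n => e n.down ≫ seqInj D E (n.down + 1)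

lemma seqCoprod_hom_ext {Y : D} {f g : seqCoprod D E ⟶ Y}
    (h : ∀ n, seqInj D E n ≫ f = seqInj D E n ≫ g) : f = g :=
  Sigma.hom_ext _ _ fun n => h n.down

lemma seqInj_comp_desc {Y : D} (φ : ∀ n, E n ⟶ Y) (n : ℕ) :
    seqInj D E n ≫ Sigma.desc (fun n : ULift.{v} ℕ => φ n.down) = φ n :=
  Sigma.ι_desc _ (ULift.up n)

lemma seqInj_comp_seqShift (n : ℕ) :
    seqInj D E n ≫ seqShift E e = e n ≫ seqInj D E (n + 1) :=
  seqInj_comp_desc (fun n => e n ≫ seqInj D E (n + 1)) n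

variable [Preadditive D]

lemma oneMinusShift_eq : oneMinusShift D E e = 𝟙 _ - seqShift E e := by
  refine seqCoprod_hom_ext fun n => ?_
  rw [Preadditive.comp_sub, Category.comp_id, seqInj_comp_seqShift]
  exact seqInj_comp_desc (fun n => seqInj D E n - e n ≫ seqInj D E (n + 1)) n

variable (e) in
/-- Composition with `seqShift`, as an element of the endomorphism ring of `Hom(K, ∐ Eₙ)`. -/
noncomputable def seqShiftEnd (K : D) : AddMonoid.End (K ⟶ seqCoprod D E) :=
  Preadditive.rightComp K (seqShift E e)

lemma exists_seqShiftEnd_pow_comp_seqInj {K : D} {n : ℕ} (a : K ⟶ E n) (k : ℕ) :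
    ∃ b : K ⟶ E (n + k), (seqShiftEnd e K ^ k) (a ≫ seqInj D E n) = b ≫ seqInj D E (n + k) := by
  induction k with
  | zero => exact ⟨a, rfl⟩
  | succ k ih =>
    obtain ⟨b, hb⟩ := ih
    refine ⟨b ≫ e (n + k), ?_⟩
    calc (seqShiftEnd e K ^ (k + 1)) (a ≫ seqInj D E n)
        = (seqShiftEnd e K ^ k) (a ≫ seqInj D E n) ≫ seqShift E e := by rw [pow_succ']; rfl
      _ = (b ≫ e (n + k)) ≫ seqInj D E (n + k + 1) := by
        rw [hb, Category.assoc, seqInj_comp_seqShift, Category.assoc]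

lemma eq_zero_of_isIso_oneMinusShift [IsIso (oneMinusShift D E e)] {Y : D} (φ : ∀ n, E n ⟶ Y)
    (hφ : ∀ n, e n ≫ φ (n + 1) = φ n) (n : ℕ) : φ n = 0 := by
  let Φ : seqCoprod D E ⟶ Y := Sigma.desc fun n => φ n.down
  have hι (n : ℕ) : seqInj D E n ≫ Φ = φ n := seqInj_comp_desc φ n
  have hΦ : oneMinusShift D E e ≫ Φ = 0 := by
    rw [oneMinusShift_eq, Preadditive.sub_comp, Category.id_comp, sub_eq_zero]
    refine seqCoprod_hom_ext fun n => ?_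
    rw [← Category.assoc, seqInj_comp_seqShift, Category.assoc, hι, hι, hφ]
  rw [← hι n, (cancel_epi (oneMinusShift D E e)).1 (hΦ.trans comp_zero.symm), comp_zero]

end SequentialCoproduct

variable {C}

section Compact

lemma isCompactObj_iff_killSummands {X : C} : IsCompactObj C X ↔
    ∀ (α : Type v) (f : α → C) (g : X ⟶ ∐ f), ∃ s : Finset α, g ≫ killSummands f s = 0 := by
  classical
  constructor
  · intro hX α f g
    obtain ⟨s, h, rfl⟩ := hX α f g
    have hs : Sigma.desc (fun i : {a // a ∈ s} => Sigma.ι f i.1) ≫ killSummands f s = 0 :=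
      Sigma.hom_ext _ _ fun i => by simp [ι_killSummands_of_mem i.2]
    exact ⟨s, by rw [Category.assoc, hs, comp_zero]⟩
  · intro hX α f g
    obtain ⟨s, hs⟩ := hX α f g
    refine ⟨s, ∑ i : {a // a ∈ s}, (g ≫ Sigma.π f i.1) ≫
      Sigma.ι (fun i : {a // a ∈ s} => f i.1) i, ?_⟩
    simp only [Preadditive.sum_comp, Category.assoc, Sigma.ι_desc]
    simpa only [Finset.sum_coe_sort s fun i => g ≫ Sigma.π f i ≫ Sigma.ι f i, Category.assoc]
      using comp_killSummands_eq_zero_iff.1 hs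

lemma IsCompactObj.shift {X : C} (hX : IsCompactObj C X) (n : ℤ) : IsCompactObj C (X⟦n⟧) := by
  rw [isCompactObj_iff_killSummands] at hX ⊢
  intro α f g
  let e : X⟦n⟧⟦-n⟧ ≅ X := shiftShiftNeg X n
  let φ := sigmaComparison (shiftFunctor C (-n)) f
  obtain ⟨s, hs⟩ := hX α (fun i => (f i)⟦-n⟧) (e.inv ≫ g⟦-n⟧' ≫ inv φ)
  refine ⟨s, (shiftFunctor C (-n)).map_injective ?_⟩
  calc (g ≫ killSummands f s)⟦-n⟧'
      = e.hom ≫ ((e.inv ≫ g⟦-n⟧' ≫ inv φ) ≫ killSummands _ s) ≫ φ := by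
        simp only [Category.assoc, killSummands_comp_sigmaComparison, φ, Functor.map_comp,
          IsIso.inv_hom_id_assoc, Iso.hom_inv_id_assoc]
    _ = (0 : X⟦n⟧ ⟶ ∐ f)⟦-n⟧' := by rw [hs, zero_comp, comp_zero, Functor.map_zero]

lemma IsCompactObj.of_retract {X Y : C} (hY : IsCompactObj C Y) {i : X ⟶ Y} {r : Y ⟶ X}
    (hir : i ≫ r = 𝟙 X) : IsCompactObj C X := by
  rw [isCompactObj_iff_killSummands] at hY ⊢
  intro α f g
  obtain ⟨s, hs⟩ := hY α f (r ≫ g)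
  exact ⟨s, by simpa [reassoc_of% hir] using i ≫= hs⟩

lemma isCompactObj_obj₂ {T : Triangle C} (hT : T ∈ distTriang C)
    (h₁ : IsCompactObj C T.obj₁) (h₃ : IsCompactObj C T.obj₃) : IsCompactObj C T.obj₂ := by
  classical
  rw [isCompactObj_iff_killSummands] at h₁ h₃ ⊢
  intro α f g
  obtain ⟨s, hs⟩ := h₁ α f (T.mor₁ ≫ g)
  obtain ⟨r, hr⟩ := T.yoneda_exact₂ hT (g ≫ killSummands f s) (by rw [← Category.assoc, hs])
  obtain ⟨t, ht⟩ := h₃ α f r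
  exact ⟨s ∪ t, by
    rw [← killSummands_comp_killSummands, ← Category.assoc, hr, Category.assoc, ht, comp_zero]⟩

lemma isCompactObj_obj₁ {T : Triangle C} (hT : T ∈ distTriang C)
    (h₂ : IsCompactObj C T.obj₂) (h₃ : IsCompactObj C T.obj₃) : IsCompactObj C T.obj₁ :=
  isCompactObj_obj₂ (inv_rot_of_distTriang T hT) (h₃.shift (-1)) h₂

lemma isCompactObj_of_extClosure {U : Set C} (hU : U ⊆ compacts C) {X : C}
    (hX : extClosure C U X) : IsCompactObj C X := by
  induction hX with
  | of hX => exact hU hX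
  | zero hX => exact isCompactObj_iff_killSummands.2 fun _ _ _ => ⟨∅, hX.eq_of_src _ _⟩
  | ext f g h hT _ _ h₁ h₃ => exact isCompactObj_obj₂ hT h₁ h₃

lemma smd_extClosure_subset_compacts {U : Set C} (hU : U ⊆ compacts C) :
    smd C {X | extClosure C U X} ⊆ compacts C :=
  fun _ ⟨_, hY, _, _, hir⟩ => (isCompactObj_of_extClosure hU hY).of_retract hir

lemma CompactlyGenerated.isIso_of_bijective_comp (hcg : CompactlyGenerated C) {X Y : C} (f : X ⟶ Y)
    (hf : ∀ K, IsCompactObj C K → Function.Bijective fun g : K ⟶ X => g ≫ f) : IsIso f := by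
  obtain ⟨W, i, h, hT⟩ := distinguished_cocone_triangle₁ f
  refine (Triangle.isZero₁_iff_isIso₂ _ hT).1 (hcg W fun K hK q => ?_)
  have hif : i ≫ f = 0 := comp_distTriang_mor_zero₁₂ _ hT
  have hfh : f ≫ h = 0 := comp_distTriang_mor_zero₂₃ _ hT
  have hqi : q ≫ i = 0 := (hf K hK).1 (by simp [hif])
  obtain ⟨r, hr⟩ := Triangle.coyoneda_exact₁ _ hT (q⟦(1 : ℤ)⟧') (by
    change q⟦(1 : ℤ)⟧' ≫ i⟦(1 : ℤ)⟧' = 0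
    rw [← Functor.map_comp, hqi, Functor.map_zero])
  obtain ⟨r', rfl⟩ := (hf _ (hK.shift 1)).2 r
  refine (shiftFunctor C (1 : ℤ)).map_injective ?_
  calc q⟦(1 : ℤ)⟧' = (r' ≫ f) ≫ h := hr
    _ = (0 : K ⟶ W)⟦(1 : ℤ)⟧' := by rw [Category.assoc, hfh, comp_zero, Functor.map_zero]

end Compact

section Orthogonal

omit [HasCoproducts.{v} C] in
lemma obj₂_mem_lOrth {B : Set C} {T : Triangle C} (hT : T ∈ distTriang C)
    (h₁ : T.obj₁ ∈ lOrth C B) (h₃ : T.obj₃ ∈ lOrth C B) : T.obj₂ ∈ lOrth C B := fun Z hZ q => by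
  obtain ⟨r, rfl⟩ := T.yoneda_exact₂ hT q (h₁ Z hZ _)
  rw [h₃ Z hZ r, comp_zero]

lemma bigClosure_subset_lOrth {U B : Set C} (hU : U ⊆ lOrth C B) {X : C}
    (hX : bigClosure C U X) : X ∈ lOrth C B := by
  induction hX with
  | of hX => exact hU hX
  | zero hX => exact mem_lOrth_of_isZero hX
  | coprod f _ e ih =>
    intro Z hZ q
    rw [← cancel_epi e.inv, comp_zero]
    exact Sigma.hom_ext _ _ fun i => by rw [ih i Z hZ (Sigma.ι f i ≫ e.inv ≫ q), comp_zero]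
  | ext f g h hT _ _ h₁ h₃ => exact obj₂_mem_lOrth hT h₁ h₃
  | retract i r hir _ hY => exact mem_lOrth_of_retract hY hir

lemma rOrth_subset_rOrth_bigClosure (U : Set C) :
    rOrth C U ⊆ rOrth C {X | bigClosure C U X} := by
  have hU : U ⊆ lOrth C (rOrth C U) := fun X hX Y hY => hY X hX
  exact fun Y hY X hX => bigClosure_subset_lOrth hU hX Y hY

omit [HasCoproducts.{v} C] in
lemma eventually_mem_lOrth_of_extClosure {ι : Type*} {l : Filter ι} {R : ι → Set C} {U : Set C}
    (hU : ∀ X ∈ U, ∀ᶠ i in l, X ∈ lOrth C (R i)) {X : C} (hX : extClosure C U X) :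
    ∀ᶠ i in l, X ∈ lOrth C (R i) := by
  induction hX with
  | of hX => exact hU _ hX
  | zero hX => exact .of_forall fun _ => mem_lOrth_of_isZero hX
  | ext f g h hT _ _ h₁ h₃ =>
    filter_upwards [h₁, h₃] with i hi₁ hi₃ using obj₂_mem_lOrth hT hi₁ hi₃

lemma IsPreGenSeq.eventually_mem_lOrth {G : ℤ → Set C} (hG : IsPreGenSeq C G) {ι : Type*}
    {l : Filter ι} {R : ι → Set C} (hGR : ∀ n, ∀ᶠ i in l, homZero C (G n) (R i)) {K : C}
    (hK : IsCompactObj C K) : ∀ᶠ i in l, K ∈ lOrth C (R i) := by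
  obtain ⟨Y, hY, _, _, hir⟩ : K ∈ smd C {X | extClosure C (unionAll C G) X} :=
    hG.generates.symm ▸ hK
  have hU : ∀ X ∈ unionAll C G, ∀ᶠ i in l, X ∈ lOrth C (R i) := by
    intro X hX
    obtain ⟨n, hn⟩ := Set.mem_iUnion.1 hX
    exact (hGR n).mono fun i hi Z hZ q => hi X hn Z hZ q
  exact (eventually_mem_lOrth_of_extClosure hU hY).mono fun i hi => mem_lOrth_of_retract hi hir

end Orthogonal

section HomotopyColimit

variable {E : ℕ → C} {e : ∀ n, E n ⟶ E (n + 1)}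

lemma IsCompactObj.isNilpotent_seqShiftEnd {K : C} (hK : IsCompactObj C K)
    (hE : ∀ᶠ n in Filter.atTop, ∀ f : K ⟶ E n, f = 0) : IsNilpotent (seqShiftEnd e K) := by
  obtain ⟨k, hk⟩ := Filter.eventually_atTop.1 hE
  refine ⟨k, DFunLike.ext _ _ fun g => ?_⟩
  obtain ⟨s, hs⟩ := isCompactObj_iff_killSummands.1 hK _ _ g
  have hg : g = ∑ n ∈ s, ((g ≫ Sigma.π _ n) ≫ seqInj C E n.down : K ⟶ seqCoprod C E) :=
    comp_killSummands_eq_zero_iff.1 hs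
  rw [hg, map_sum]
  refine Finset.sum_eq_zero fun n _ => ?_
  obtain ⟨b, hb⟩ := exists_seqShiftEnd_pow_comp_seqInj (e := e) (g ≫ Sigma.π _ n) k
  exact hb.trans (by rw [hk _ (Nat.le_add_left k n.down) b, zero_comp])

lemma IsCompactObj.bijective_comp_oneMinusShift {K : C} (hK : IsCompactObj C K)
    (hE : ∀ᶠ n in Filter.atTop, ∀ f : K ⟶ E n, f = 0) :
    Function.Bijective fun g : K ⟶ seqCoprod C E => g ≫ oneMinusShift C E e := by
  have hunit : IsUnit (1 - seqShiftEnd e K) := (hK.isNilpotent_seqShiftEnd hE).isUnit_one_sub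
  convert hunit.smul_bijective (β := K ⟶ seqCoprod C E) using 2 with g
  rw [oneMinusShift_eq, Preadditive.comp_sub, Category.comp_id]
  rfl

lemma CompactlyGenerated.isIso_oneMinusShift (hcg : CompactlyGenerated C)
    (hE : ∀ K, IsCompactObj C K → ∀ᶠ n in Filter.atTop, ∀ f : K ⟶ E n, f = 0) :
    IsIso (oneMinusShift C E e) :=
  hcg.isIso_of_bijective_comp _ fun K hK => hK.bijective_comp_oneMinusShift (hE K hK)

end HomotopyColimit

section Factorization

/-- The map `v` factors through an object of the closure of `U` under finite direct sums and
extensions. For `v = 𝟙 X` this says that `X` lies in `smd (coprod U)`. -/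
def FactorsThroughExt (U : Set C) {X Y : C} (v : X ⟶ Y) : Prop :=
  ∃ E : C, extClosure C U E ∧ ∃ (a : X ⟶ E) (b : E ⟶ Y), a ≫ b = v

variable {U : Set C}

section

omit [HasCoproducts.{v} C]

lemma FactorsThroughExt.zero (X Y : C) : FactorsThroughExt U (0 : X ⟶ Y) :=
  ⟨_, .zero (isZero_zero C), 0, 0, zero_comp⟩

lemma FactorsThroughExt.comp {X Y Z : C} {v : X ⟶ Y} (hv : FactorsThroughExt U v) (w : Y ⟶ Z) :
    FactorsThroughExt U (v ≫ w) := by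
  obtain ⟨E, hE, a, b, rfl⟩ := hv
  exact ⟨E, hE, a, b ≫ w, (Category.assoc _ _ _).symm⟩

lemma FactorsThroughExt.add {X Y : C} {v w : X ⟶ Y} (hv : FactorsThroughExt U v)
    (hw : FactorsThroughExt U w) : FactorsThroughExt U (v + w) := by
  obtain ⟨E, hE, a, b, rfl⟩ := hv
  obtain ⟨E', hE', a', b', rfl⟩ := hw
  exact ⟨E ⊞ E', .ext _ _ _ (binaryBiproductTriangle_distinguished E E') hE hE',
    biprod.lift a a', biprod.desc b b', biprod.lift_desc⟩

lemma FactorsThroughExt.sum {X Y : C} {ι : Type*} (s : Finset ι) {v : ι → (X ⟶ Y)}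
    (hv : ∀ i ∈ s, FactorsThroughExt U (v i)) : FactorsThroughExt U (∑ i ∈ s, v i) :=
  Finset.sum_induction v _ (fun _ _ => .add) (.zero X Y) hv

lemma exists_mor₁_comp_eq {T : Triangle C} (hT : T ∈ distTriang C) {Y : C} (b : T.obj₁ ⟶ Y)
    (hb : T.mor₃ ≫ b⟦(1 : ℤ)⟧' = 0) : ∃ d : T.obj₂ ⟶ Y, T.mor₁ ≫ d = b := by
  obtain ⟨d, hd, -⟩ := complete_distinguished_triangle_morphism₂ T _ hT
    (contractible_distinguished Y) b 0 (hb.trans comp_zero.symm)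
  exact ⟨d, hd.trans (Category.comp_id b)⟩

/-- Pushing the triangle out along `obj₁ ⟶ E` gives an extension of `obj₃` by `E` through which `v`
factors, up to a map factoring through `obj₃`. -/
lemma FactorsThroughExt.of_mor₁_comp {T : Triangle C} (hT : T ∈ distTriang C)
    (h₃ : extClosure C U T.obj₃) {Y : C} {v : T.obj₂ ⟶ Y}
    (hv : FactorsThroughExt U (T.mor₁ ≫ v)) : FactorsThroughExt U v := by
  obtain ⟨E, hE, a, b, hab⟩ := hv
  obtain ⟨Q, i, p, hQ⟩ := distinguished_cocone_triangle₂ (T.mor₃ ≫ a⟦(1 : ℤ)⟧')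
  obtain ⟨c, hc, -⟩ : ∃ c : T.obj₂ ⟶ Q, T.mor₁ ≫ c = a ≫ i ∧ T.mor₂ ≫ 𝟙 _ = c ≫ p :=
    complete_distinguished_triangle_morphism₂ T _ hT hQ a (𝟙 _) (Category.id_comp _).symm
  obtain ⟨d, hd⟩ : ∃ d : Q ⟶ Y, i ≫ d = b := exists_mor₁_comp_eq hQ b (by
    have hT₃₁ := comp_distTriang_mor_zero₃₁ T hT
    change (T.mor₃ ≫ a⟦(1 : ℤ)⟧') ≫ b⟦(1 : ℤ)⟧' = 0
    rw [Category.assoc, ← Functor.map_comp, hab, Functor.map_comp, reassoc_of% hT₃₁, zero_comp])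
  obtain ⟨r, hr⟩ := T.yoneda_exact₂ hT (v - c ≫ d) (by
    rw [Preadditive.comp_sub, reassoc_of% hc, hd, hab, sub_self])
  rw [sub_eq_iff_eq_add.1 hr]
  exact .add ⟨_, h₃, _, r, rfl⟩ ⟨Q, .ext _ _ _ hQ hE h₃, c, d, rfl⟩

end

variable (hU : U ⊆ compacts C)
include hU

lemma FactorsThroughExt.of_comp_mor₂ {T : Triangle C} (hT : T ∈ distTriang C)
    (h₁ : ∀ K, IsCompactObj C K → ∀ w : K ⟶ T.obj₁, FactorsThroughExt U w) {K : C}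
    (hK : IsCompactObj C K) {v : K ⟶ T.obj₂} (hv : FactorsThroughExt U (v ≫ T.mor₂)) :
    FactorsThroughExt U v := by
  obtain ⟨E, hE, a, b, hab⟩ := hv
  obtain ⟨K', m, δ, hK'⟩ := distinguished_cocone_triangle₁ a
  have hma : m ≫ a = 0 := comp_distTriang_mor_zero₁₂ _ hK'
  obtain ⟨w, hw⟩ := T.coyoneda_exact₂ hT (m ≫ v) (by
    rw [Category.assoc, ← hab, reassoc_of% hma, zero_comp])
  have hK'c : IsCompactObj C K' := isCompactObj_obj₁ hK' hK (isCompactObj_of_extClosure hU hE)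
  have hmv : FactorsThroughExt U (m ≫ v) := hw ▸ (h₁ K' hK'c w).comp T.mor₁
  exact .of_mor₁_comp hK' hE hmv

lemma factorsThroughExt_of_bigClosure {X : C} (hX : bigClosure C U X) :
    ∀ K, IsCompactObj C K → ∀ v : K ⟶ X, FactorsThroughExt U v := by
  induction hX with
  | of hX => exact fun _ _ v => ⟨_, .of hX, v, 𝟙 _, Category.comp_id v⟩
  | zero hX => exact fun _ _ v => ⟨_, .zero hX, v, 𝟙 _, Category.comp_id v⟩
  | coprod f _ e ih =>
    classical
    intro K hK v
    obtain ⟨s, hs⟩ := isCompactObj_iff_killSummands.1 hK _ f (v ≫ e.hom)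
    have hve : FactorsThroughExt U (v ≫ e.hom) := by
      rw [comp_killSummands_eq_zero_iff.1 hs]
      exact .sum s fun i _ => (ih i K hK _).comp _
    simpa using hve.comp e.inv
  | ext f g h hT _ _ h₁ h₃ =>
    exact fun K hK v => .of_comp_mor₂ hU hT h₁ hK (h₃ K hK (v ≫ g))
  | retract i r hir _ ih =>
    intro K hK v
    simpa [hir] using (ih K hK (v ≫ i)).comp r

end Factorization

section Tower

/-- The map `d` is the second map of a distinguished triangle whose first object, the fiber of `d`,
lies in `V`; this is the condition on the transition maps of an approximation tower. -/
def HasFiberIn (V : Set C) {X Y : C} (d : X ⟶ Y) : Prop :=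
  ∃ (E : C) (f : E ⟶ X) (h : Y ⟶ E⟦(1 : ℤ)⟧), Triangle.mk f d h ∈ distTriang C ∧ E ∈ V

omit [HasCoproducts.{v} C] in
lemma exists_tower {V : Set C} {S : ℕ → Set C}
    (happ : ∀ n, ∀ F ∈ S n, approxTriangle C F V (S (n + 1))) {F : C} (hF : F ∈ S 0) :
    ∃ (D : ℕ → C) (d : ∀ n, D n ⟶ D (n + 1)),
      D 0 = F ∧ (∀ n, D n ∈ S n) ∧ ∀ n, HasFiberIn V (d n) := by
  have hstep (n : ℕ) (X : S n) : ∃ (Y : S (n + 1)) (d : X.1 ⟶ Y.1), HasFiberIn V d := by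
    obtain ⟨E, Y, f, d, h, hT, hE, hY⟩ := happ n X X.2
    exact ⟨⟨Y, hY⟩, d, E, f, h, hT, hE⟩
  choose next d hd using hstep
  let D (n : ℕ) : S n := Nat.rec ⟨F, hF⟩ next n
  exact ⟨fun n => (D n).1, fun n => d n (D n), rfl, fun n => (D n).2, fun n => hd n (D n)⟩

omit [HasCoproducts.{v} C] in
lemma HasFiberIn.exists_comp_eq {V : Set C} {X X' : C} {d : X ⟶ X'} (hd : HasFiberIn V d) {Y : C}
    (hY : Y ∈ rOrth C V) (q : X ⟶ Y) : ∃ q' : X' ⟶ Y, d ≫ q' = q := by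
  obtain ⟨E, f, h, hT, hE⟩ := hd
  obtain ⟨q', hq'⟩ := Triangle.yoneda_exact₂ _ hT q (hY E hE _)
  exact ⟨q', hq'.symm⟩

lemma HasFiberIn.factorsThroughExt {U : Set C} (hU : U ⊆ compacts C) {X X' : C} {d : X ⟶ X'}
    (hd : HasFiberIn {E | bigClosure C U E} d) {K : C} (hK : IsCompactObj C K) {v : K ⟶ X}
    (hv : FactorsThroughExt U (v ≫ d)) : FactorsThroughExt U v := by
  obtain ⟨E, f, h, hT, hE⟩ := hd
  exact .of_comp_mor₂ hU hT (factorsThroughExt_of_bigClosure hU hE) hK hv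

lemma factorsThroughExt_of_tower {U : Set C} (hU : U ⊆ compacts C) {D : ℕ → C}
    {d : ∀ n, D n ⟶ D (n + 1)} (hd : ∀ n, HasFiberIn {E | bigClosure C U E} (d n)) {K : C}
    (hK : IsCompactObj C K) {n : ℕ} (hn : ∀ v : K ⟶ D n, v = 0) (v : K ⟶ D 0) :
    FactorsThroughExt U v := by
  refine Nat.decreasingInduction (motive := fun m _ => ∀ v : K ⟶ D m, FactorsThroughExt U v)
    (fun m _ ih v => (hd m).factorsThroughExt hU hK (ih _)) (fun v => ?_) (Nat.zero_le n) v
  exact hn v ▸ .zero K (D n)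

lemma subset_lOrth_rOrth_of_approx (hcg : CompactlyGenerated C) {V : Set C} {S : ℕ → Set C}
    (happ : ∀ n, ∀ F ∈ S n, approxTriangle C F V (S (n + 1)))
    (hS : ∀ K, IsCompactObj C K → ∀ᶠ n in Filter.atTop, K ∈ lOrth C (S n)) :
    S 0 ⊆ lOrth C (rOrth C V) := by
  intro F hF Y hY q
  obtain ⟨D, d, rfl, hD, hd⟩ := exists_tower happ hF
  choose next hnext using fun n => (hd n).exists_comp_eq hY
  let φ (n : ℕ) : D n ⟶ Y := Nat.rec q next n
  have : IsIso (oneMinusShift C D d) := hcg.isIso_oneMinusShift fun K hK =>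
    (hS K hK).mono fun n hn f => hn _ (hD n) f
  exact eq_zero_of_isIso_oneMinusShift (e := d) φ (fun n => hnext n (φ n)) 0

lemma mem_smd_extClosure_of_approx {U : Set C} (hU : U ⊆ compacts C) {S : ℕ → Set C}
    (happ : ∀ n, ∀ F ∈ S n, approxTriangle C F {E | bigClosure C U E} (S (n + 1))) {F : C}
    (hF : F ∈ S 0) (hFc : IsCompactObj C F) {n : ℕ} (hn : F ∈ lOrth C (S n)) :
    F ∈ smd C {X | extClosure C U X} := by
  obtain ⟨D, d, rfl, hD, hd⟩ := exists_tower happ hF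
  exact factorsThroughExt_of_tower hU hd hFc (hn _ (hD n)) (𝟙 _)

end Tower

section Metric

omit [HasCoproducts.{v} C] in
lemma subset_smd_extClosure (U : Set C) : U ⊆ smd C {X | extClosure C U X} :=
  fun X hX => ⟨X, .of hX, 𝟙 X, 𝟙 X, Category.comp_id _⟩

lemma bigClosure_mono {U V : Set C} (h : U ⊆ V) {X : C} (hX : bigClosure C U X) :
    bigClosure C V X := by
  induction hX with
  | of hX => exact .of (h hX)
  | zero hX => exact .zero hX
  | coprod f _ e ih => exact .coprod f ih e
  | ext f g h hT _ _ h₁ h₃ => exact .ext f g h hT h₁ h₃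
  | retract i r hir _ hY => exact .retract i r hir hY

lemma gBarIic_mono (G : ℤ → Set C) {b c : ℤ} (hbc : b ≤ c) : gBarIic C G b ⊆ gBarIic C G c :=
  fun _ => bigClosure_mono <| Set.biUnion_subset_biUnion_left <| Set.Iic_subset_Iic.2 hbc

lemma gBarInt_subset_gBarIic (G : ℤ → Set C) (a b : ℤ) : gBarInt C G a b ⊆ gBarIic C G b :=
  fun _ => bigClosure_mono <| Set.biUnion_subset_biUnion_left Set.Icc_subset_Iic_self

omit [HasCoproducts.{v} C] in
lemma approxTriangle.mono {F : C} {S S' D : Set C} (h : approxTriangle C F S D) (hS : S ⊆ S') :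
    approxTriangle C F S' D := by
  obtain ⟨E, Y, f, g, δ, hT, hE, hY⟩ := h
  exact ⟨E, Y, f, g, δ, hT, hS hE, hY⟩

lemma rOrth_MG_subset (G : ℤ → Set C) (n : ℤ) : rOrth C (MG C G n) ⊆ rOrth C (gBarIic C G (-n)) :=
  (rOrth_anti (subset_smd_extClosure _)).trans (rOrth_subset_rOrth_bigClosure _)

lemma unionIic_subset_compacts {G : ℤ → Set C} (hG : ∀ n, G n ⊆ compacts C) (b : ℤ) :
    unionIic C G b ⊆ compacts C :=
  Set.iUnion₂_subset fun n _ => hG n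

lemma MG_subset_compacts {G : ℤ → Set C} (hG : ∀ n, G n ⊆ compacts C) (n : ℤ) :
    MG C G n ⊆ compacts C :=
  smd_extClosure_subset_compacts (unionIic_subset_compacts hG (-n))

lemma compacts_subset_closCompacts {R : ℤ → Set C} (hR : ∀ n (X : C), IsZero X → X ∈ R n) :
    compacts C ⊆ closCompacts C R :=
  fun X hX => Set.mem_iInter.2 fun n =>
    ⟨X, _, 𝟙 X, 0, 0, contractible_distinguished X, hX, hR n _ (isZero_zero C)⟩

omit [HasCoproducts.{v} C] in
lemma RG_subset_of_MG_subset {G R : ℤ → Set C} {m n : ℤ} (hR : lOrth C (rOrth C (R n)) = R n)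
    (h : MG C G m ⊆ R n) : RG C G m ⊆ R n :=
  hR ▸ lOrth_anti (rOrth_anti h)

section Approximation

variable {G N : ℤ → Set C} {A : ℤ}
  (happ : ∀ i, ∀ F ∈ N i, approxTriangle C F (gBarIic C G (A - i)) (N (i + 1)))
  (hN : ∀ K, IsCompactObj C K → ∀ᶠ i in Filter.atTop, K ∈ lOrth C (N i))

include happ in
lemma approxTriangle_of_add_natCast (i : ℤ) (n : ℕ) (F : C) (hF : F ∈ N (i + A + n)) :
    approxTriangle C F (gBarIic C G (-i)) (N (i + A + (n + 1 : ℕ))) := by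
  rw [Nat.cast_succ, ← add_assoc]
  exact (happ _ F hF).mono (gBarIic_mono G (by lia))

include hN in
lemma eventually_mem_lOrth_add_natCast (i : ℤ) {K : C} (hK : IsCompactObj C K) :
    ∀ᶠ n : ℕ in Filter.atTop, K ∈ lOrth C (N (i + n)) :=
  (Filter.tendsto_atTop_add_const_left _ i tendsto_natCast_atTop_atTop).eventually (hN K hK)

include happ hN

lemma subset_RG_of_approx (hcg : CompactlyGenerated C) (i : ℤ) : N (i + A) ⊆ RG C G i := by
  have hsub := subset_lOrth_rOrth_of_approx hcg (S := fun n => N (i + A + n))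
    (approxTriangle_of_add_natCast happ i) fun K hK => eventually_mem_lOrth_add_natCast hN _ hK
  intro F hF
  exact lOrth_anti (rOrth_MG_subset G i) (hsub (by simpa using hF))

lemma inter_compacts_subset_MG_of_approx (hG : ∀ n, G n ⊆ compacts C) (i : ℤ) :
    N (i + A) ∩ compacts C ⊆ MG C G i := by
  rintro F ⟨hF, hFc⟩
  obtain ⟨n, hn⟩ := (eventually_mem_lOrth_add_natCast hN (i + A) hFc).exists
  exact mem_smd_extClosure_of_approx (unionIic_subset_compacts hG (-i))
    (S := fun n => N (i + A + n)) (approxTriangle_of_add_natCast happ i) (by simpa using hF) hFc hn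

end Approximation

end Metric

variable (C)

theorem statement_10_general (G Rm : ℤ → Set C) (A : ℤ)
    (hcg : CompactlyGenerated C) (hG : IsPreGenSeq C G) (hA : 0 ≤ A)
    (hR : ∀ i, lOrth C (rOrth C (Rm i)) = Rm i)
    (hMG : ∀ i, MG C G (i + A) ⊆ Rm i)
    (hGR : ∀ n, ∀ᶠ i in Filter.atTop, homZero C (G n) (Rm i))
    (happ : ∀ i, ∀ F ∈ Rm i ∩ closCompacts C Rm,
      approxTriangle C F (gBarIic C G (A - i)) (Rm (i + 1) ∩ closCompacts C Rm)) :
    MetricNEquiv C (MG C G) (fun n => Rm n ∩ compacts C) ∧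
    MetricNEquiv C (fun n => Rm n ∩ closCompacts C Rm)
      (fun n => RG C G n ∩ closCompacts C Rm) ∧
    ((∀ i, ∀ F ∈ Rm i, approxTriangle C F (gBarIic C G (A - i)) (Rm (i + 1))) →
      MetricNEquiv C Rm (RG C G)) := by
  have hvan (K : C) (hK : IsCompactObj C K) : ∀ᶠ i in Filter.atTop, K ∈ lOrth C (Rm i) :=
    hG.eventually_mem_lOrth hGR hK
  have hvan' (K : C) (hK : IsCompactObj C K) :
      ∀ᶠ i in Filter.atTop, K ∈ lOrth C (Rm i ∩ closCompacts C Rm) :=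
    (hvan K hK).mono fun _ hi => lOrth_anti Set.inter_subset_left hi
  have hcc : compacts C ⊆ closCompacts C Rm :=
    compacts_subset_closCompacts fun n X hX => hR n ▸ mem_lOrth_of_isZero hX
  have hRG (i : ℤ) : RG C G (i + A) ⊆ Rm i := RG_subset_of_MG_subset (hR i) (hMG i)
  refine ⟨⟨A, hA, fun i => ?_, fun i => ?_⟩, ⟨A, hA, fun i => ?_, fun i => ?_⟩,
    fun happ_all => ⟨A, hA, subset_RG_of_approx happ_all hvan hcg, hRG⟩⟩
  · exact Set.subset_inter (hMG i) (MG_subset_compacts hG.compact _)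
  · exact fun F hF => inter_compacts_subset_MG_of_approx happ hvan' hG.compact i
      ⟨⟨hF.1, hcc hF.2⟩, hF.2⟩
  · exact Set.subset_inter (subset_RG_of_approx happ hvan' hcg i) Set.inter_subset_right
  · exact Set.inter_subset_inter_left _ (hRG i)

theorem statement_10 (G Rm : ℤ → Set C) (A : ℤ)
    (hcg : CompactlyGenerated C) (hG : IsGenSeq C G)
    (h : IsWeakGQuasiApprox C G Rm A) :
    MetricNEquiv C (MG C G) (fun n => Rm n ∩ compacts C) ∧
    MetricNEquiv C (fun n => Rm n ∩ closCompacts C Rm)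
      (fun n => RG C G n ∩ closCompacts C Rm) ∧
    (IsWeakGApprox C G Rm A → MetricNEquiv C Rm (RG C G)) := by
  obtain ⟨hcompact, hclosure, hall⟩ := statement_10_general C G Rm A hcg hG.toIsPreGenSeq
    h.A_pos.le h.orthMetric.orth (fun i => (h.cond1 i).trans Set.inter_subset_left)
    (fun n => Filter.eventually_atTop.2 (h.cond2 n))
    fun i F hF => (h.approx i F hF).mono (gBarInt_subset_gBarIic G _ _)
  exact ⟨hcompact, hclosure, fun hw =>
    hall fun i F hF => (hw.approx i F hF).mono (gBarInt_subset_gBarIic G _ _)⟩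

end GApprox
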